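/- (Least period of the harmonic highway) Let k > 1 and let s be the trace sequence of the ant L^{2k}R started from (C_{k,1}^{0}, (0,0), (0,1)). Then s is periodic with period 32k+4 (s_{t+32k+4} = s_t for all t ≥ 0) and 32k+4 is its smallest period: for every p with 0 < p < 32k+4 there exists t with s_{t+p} ≠ s_t. -/

import Mathlib

/-- Cells of the grid `ℤ²`. -/
abbrev Cell : Type := ℤ × ℤ

/-- The four unit directions of `ℤ²` (the state set `Q`). -/
inductive Dir : Type
  | E | N | W | S
deriving DecidableEq

/-- Rotation by 90° counterclockwise. -/
def Dir.left : Dir → Dir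
  | .E => .N | .N => .W | .W => .S | .S => .E

/-- Rotation by 90° clockwise. -/
def Dir.right : Dir → Dir
  | .E => .S | .S => .W | .W => .N | .N => .E

/-- The unit vector of a direction. -/
def Dir.vec : Dir → Cell
  | .E => (1, 0) | .N => (0, 1) | .W => (-1, 0) | .S => (0, -1)

/-- Configurations: a picture `ℤ² → ℤ/nℤ`, a position and a direction. -/
abbrev Config (n : ℕ) : Type := (Cell → ZMod n) × Cell × Dir

/-- One step of the generalised ant whose rule word over the alphabet `ℤ/nℤ` is
described by `isL : ZMod n → Bool` (`isL a = true` iff the ant turns left on symbol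
`a`): the symbol under the ant is increased by `1 (mod n)`, the ant turns left
(counterclockwise) or right (clockwise), and moves one step in its new direction. -/
def antStep (n : ℕ) (isL : ZMod n → Bool) (cfg : Config n) : Config n :=
  let C := cfg.1
  let p := cfg.2.1
  let d' := if isL (C p) then cfg.2.2.left else cfg.2.2.right
  (Function.update C p (C p + 1), p + d'.vec, d')

/-- The rule word `L^{2k}R`: the ant turns left on symbols `0, …, 2k−1` and right
on symbol `2k` (alphabet `ℤ/(2k+1)ℤ`). -/
def isL2kR (k : ℕ) : ZMod (2 * k + 1) → Bool := fun a => decide (a.val < 2 * k)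

/-- The picture `C_{k,i}^{n} : ℤ² → ℤ/(2k+1)ℤ`. -/
def pic (k : ℕ) (i : ZMod (2 * k + 1)) (n : ℕ) : Cell → ZMod (2 * k + 1) := fun q =>
  if q.2 = (n : ℤ) ∧ (q.1 = 1 - (n : ℤ) ∨ q.1 = 2 - (n : ℤ)) then i
  else if q.1 = 1 - (n : ℤ) ∧ q.2 = (n : ℤ) - 1 then i + 1
  else if q.1 = 2 - (n : ℤ) ∧ q.2 = (n : ℤ) - 1 then i - 1
  else if q.2 = -q.1 - 2 ∧ -(n : ℤ) ≤ q.1 ∧ q.1 ≤ -1 then ((2 * k : ℕ) : ZMod (2 * k + 1))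
  else if q.2 = -q.1 + 2 ∧ 2 ≤ q.1 ∧ q.1 ≤ (n : ℤ) + 1 then ((2 * k : ℕ) : ZMod (2 * k + 1)) - 1
  else if q.2 = -q.1 + 1 ∧ 2 ≤ q.1 ∧ q.1 ≤ (n : ℤ) + 1 then ((2 * k : ℕ) : ZMod (2 * k + 1)) - 2
  else 0

/-- The trace of the ant `L^{2k}R` started from `(C_{k,i}^{0}, (0,0), ↑)`:
`trace k i t` is the symbol read at time `t`. -/
def trace (k : ℕ) (i : ZMod (2 * k + 1)) (t : ℕ) : ZMod (2 * k + 1) :=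
  ((antStep (2 * k + 1) (isL2kR k))^[t] (pic k i 0, ((0, 0) : Cell), Dir.N)).1
    ((antStep (2 * k + 1) (isL2kR k))^[t] (pic k i 0, ((0, 0) : Cell), Dir.N)).2.1

namespace HHW

abbrev NCfg : Type := (Cell → ℕ) × Cell × Dir

/-- The ant on natural-number pictures (threshold `n+2`). -/
def stp (n : ℕ) (A : NCfg) : NCfg :=
  if A.1 A.2.1 < n + 2 then
    (Function.update A.1 A.2.1 (A.1 A.2.1 + 1), A.2.1 + A.2.2.left.vec, A.2.2.left)
  else (Function.update A.1 A.2.1 0, A.2.1 + A.2.2.right.vec, A.2.2.right)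

def out (A : NCfg) : ℕ := A.1 A.2.1

def Run (n : ℕ) (A : NCfg) (L : ℕ) (B : NCfg) (g : ℕ → ℕ) : Prop :=
  (stp n)^[L] A = B ∧ ∀ i < L, out ((stp n)^[i] A) = g i

def cat (L : ℕ) (g g' : ℕ → ℕ) : ℕ → ℕ := fun i => if i < L then g i else g' (i - L)

def spf (a b c d : ℕ) : ℕ → ℕ := fun i =>
  (if i % 4 = 0 then a else if i % 4 = 1 then b else if i % 4 = 2 then c else d) + i / 4

theorem Run.comp {n : ℕ} {A B D : NCfg} {L M : ℕ} {g h : ℕ → ℕ}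
    (h1 : Run n A L B g) (h2 : Run n B M D h) : Run n A (L + M) D (cat L g h) := by
  obtain ⟨e1, o1⟩ := h1
  obtain ⟨e2, o2⟩ := h2
  constructor
  · rw [add_comm, Function.iterate_add_apply, e1, e2]
  · intro i hi
    unfold cat
    split_ifs with h
    · exact o1 i h
    · obtain ⟨j, rfl⟩ : ∃ j, i = j + L := ⟨i - L, by omega⟩
      rw [Function.iterate_add_apply, e1, o2 j (by omega)]
      congr 1
      omega

theorem runL {n : ℕ} {C C' : Cell → ℕ} {p p' : Cell} {d d' : Dir} (v : ℕ)
    (hv : C p = v) (hl : v < n + 2) (hC : Function.update C p (v + 1) = C')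
    (hp : p + d.left.vec = p') (hd : d.left = d') :
    Run n (C, p, d) 1 (C', p', d') (fun _ => v) := by
  subst hv hC hp hd
  refine ⟨?_, ?_⟩
  · simp [stp, hl]
  · intro i hi
    obtain rfl : i = 0 := by omega
    rfl

theorem runR {n : ℕ} {C C' : Cell → ℕ} {p p' : Cell} {d d' : Dir}
    (hv : C p = n + 2) (hC : Function.update C p 0 = C')
    (hp : p + d.right.vec = p') (hd : d.right = d') :
    Run n (C, p, d) 1 (C', p', d') (fun _ => n + 2) := by
  subst hC hp hd
  refine ⟨?_, ?_⟩
  · simp [stp, hv]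
  · intro i hi
    obtain rfl : i = 0 := by omega
    exact hv

theorem spin {n : ℕ} (F : ℕ → NCfg) (a b c d m : ℕ)
    (h : ∀ j < m, Run n (F j) (1 + (1 + (1 + 1))) (F (j + 1))
      (cat 1 (fun _ => a + j) (cat 1 (fun _ => b + j)
        (cat 1 (fun _ => c + j) (fun _ => d + j))))) :
    Run n (F 0) (4 * m) (F m) (spf a b c d) := by
  induction m with
  | zero => exact ⟨rfl, fun i hi => by omega⟩
  | succ m ih =>
    have h1 := ih (fun j hj => h j (by omega))
    have h2 := h1.comp (h m (by omega))
    refine ⟨h2.1, ?_⟩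
    intro i hi
    rw [h2.2 i (by omega)]
    simp only [cat, spf]
    split_ifs <;> omega

def W (a1 a2 a3 a4 a5 a6 a7 a8 a9 a10 a11 a12 a13 a14 a15 : ℕ) (C : Cell → ℕ) : Cell → ℕ :=
  fun q =>
    if q = (0, 0) then a1 else if q = (-1, 0) then a2 else if q = (-1, -1) then a3
    else if q = (0, -1) then a4 else if q = (1, 0) then a5 else if q = (1, 1) then a6
    else if q = (0, 1) then a7 else if q = (1, -1) then a8 else if q = (2, -1) then a9
    else if q = (2, 0) then a10 else if q = (-1, 1) then a11 else if q = (-2, 1) then a12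
    else if q = (-2, 0) then a13 else if q = (0, 2) then a14 else if q = (-1, 2) then a15
    else C q

theorem upd_ext {C C' : Cell → ℕ} {p : Cell} {v : ℕ} (h1 : v = C' p)
    (h2 : ∀ q, q ≠ p → C q = C' q) : Function.update C p v = C' := by
  funext q
  by_cases h : q = p
  · subst h; simp [h1]
  · rw [Function.update_of_ne h]; exact h2 q h

def ff (n : ℕ) : ℕ → ℕ :=
  cat (4 * (n + 2)) (spf 0 0 0 0) <|
  cat 1 (fun _ => n + 2) <|
  cat (4 * (n + 1)) (spf 1 0 0 0) <|
  cat 1 (fun _ => n + 2) <|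
  cat (4 * n) (spf 2 0 1 0) <|
  cat 1 (fun _ => n + 2) <|
  cat 1 (fun _ => n + 2) <|
  cat 1 (fun _ => n + 1) <|
  cat 1 (fun _ => n + 2) <|
  cat (4 * (n + 2)) (spf 0 0 0 0) <|
  cat 1 (fun _ => n + 2) <|
  cat 1 (fun _ => n + 1) <|
  cat 1 (fun _ => 0) <|
  cat 1 (fun _ => 0) <|
  cat 1 (fun _ => 0) <|
  cat 1 (fun _ => n + 2) <|
  cat 1 (fun _ => n + 2) <|
  cat 1 (fun _ => n + 2) <|
  cat 1 (fun _ => 1) <| (fun _ => n + 2)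

theorem big (n : ℕ) (C : Cell → ℕ) :
    Run n (W 0 0 0 0 1 0 0 2 0 1 0 0 0 0 0 C, (0, 0), Dir.N) (16 * n + 36)
      (W 0 0 (n + 2) 0 n (n + 1) 0 0 n (n + 1) 2 0 (n + 2) 1 1 C, (-2, 2), Dir.N) (ff n) := by
  have p1 := spin (n := n) (fun j => (W j j j j 1 0 0 2 0 1 0 0 0 0 0 C, (0, 0), Dir.N))
    0 0 0 0 (n + 2) (by
      intro j hj
      refine (runL (C' := W (j+1) j j j 1 0 0 2 0 1 0 0 0 0 0 C) (p' := (-1, 0)) (d' := Dir.W) _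
        ?_ ?_ ?_ ?_ ?_).comp
        ((runL (C' := W (j+1) (j+1) j j 1 0 0 2 0 1 0 0 0 0 0 C) (p' := (-1, -1)) (d' := Dir.S) _
        ?_ ?_ ?_ ?_ ?_).comp
        ((runL (C' := W (j+1) (j+1) (j+1) j 1 0 0 2 0 1 0 0 0 0 0 C) (p' := (0, -1)) (d' := Dir.E) _
        ?_ ?_ ?_ ?_ ?_).comp (runL _ ?_ ?_ ?_ ?_ ?_)))
      all_goals first
        | omega
        | rfl
        | (apply upd_ext
           · simp [W]
           · intro q hq; simp [W, hq])
        | (simp [W]; done))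
  have p2 := spin (n := n) (fun j => (W j (n+2) (n+2) (n+2) (j+1) j j 2 0 1 0 0 0 0 0 C,
      (1, 0), Dir.E))
    1 0 0 0 (n + 1) (by
      intro j hj
      refine (runL (C' := W j (n+2) (n+2) (n+2) (j+2) j j 2 0 1 0 0 0 0 0 C)
        (p' := (1, 1)) (d' := Dir.N) _ ?_ ?_ ?_ ?_ ?_).comp
        ((runL (C' := W j (n+2) (n+2) (n+2) (j+2) (j+1) j 2 0 1 0 0 0 0 0 C)
        (p' := (0, 1)) (d' := Dir.W) _ ?_ ?_ ?_ ?_ ?_).comp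
        ((runL (C' := W j (n+2) (n+2) (n+2) (j+2) (j+1) (j+1) 2 0 1 0 0 0 0 0 C)
        (p' := (0, 0)) (d' := Dir.S) _ ?_ ?_ ?_ ?_ ?_).comp (runL _ ?_ ?_ ?_ ?_ ?_)))
      all_goals first
        | omega
        | rfl
        | (apply upd_ext
           · simp [W]; try omega
           · intro q hq; simp [W, hq])
        | (simp [W]; try omega
           done))
  have p3 := spin (n := n) (fun j => (W (n+1) (n+2) (n+2) (n+2) j (n+1) (n+1) (j+2) j (j+1)
      0 0 0 0 0 C, (1, -1), Dir.S))
    2 0 1 0 n (by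
      intro j hj
      refine (runL (C' := W (n+1) (n+2) (n+2) (n+2) j (n+1) (n+1) (j+3) j (j+1) 0 0 0 0 0 C)
        (p' := (2, -1)) (d' := Dir.E) _ ?_ ?_ ?_ ?_ ?_).comp
        ((runL (C' := W (n+1) (n+2) (n+2) (n+2) j (n+1) (n+1) (j+3) (j+1) (j+1) 0 0 0 0 0 C)
        (p' := (2, 0)) (d' := Dir.N) _ ?_ ?_ ?_ ?_ ?_).comp
        ((runL (C' := W (n+1) (n+2) (n+2) (n+2) j (n+1) (n+1) (j+3) (j+1) (j+2) 0 0 0 0 0 C)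
        (p' := (1, 0)) (d' := Dir.W) _ ?_ ?_ ?_ ?_ ?_).comp (runL _ ?_ ?_ ?_ ?_ ?_)))
      all_goals first
        | omega
        | rfl
        | (apply upd_ext
           · simp [W]; try omega
           · intro q hq; simp [W, hq])
        | (simp [W]; try omega
           done))
  have p6 := spin (n := n) (fun j => (W (n+2) j (n+2) 0 n (n+1) (n+1) 0 n (n+1) j j j 0 0 C,
      (-1, 1), Dir.N))
    0 0 0 0 (n + 2) (by
      intro j hj
      refine (runL (C' := W (n+2) j (n+2) 0 n (n+1) (n+1) 0 n (n+1) (j+1) j j 0 0 C)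
        (p' := (-2, 1)) (d' := Dir.W) _ ?_ ?_ ?_ ?_ ?_).comp
        ((runL (C' := W (n+2) j (n+2) 0 n (n+1) (n+1) 0 n (n+1) (j+1) (j+1) j 0 0 C)
        (p' := (-2, 0)) (d' := Dir.S) _ ?_ ?_ ?_ ?_ ?_).comp
        ((runL (C' := W (n+2) j (n+2) 0 n (n+1) (n+1) 0 n (n+1) (j+1) (j+1) (j+1) 0 0 C)
        (p' := (-1, 0)) (d' := Dir.E) _ ?_ ?_ ?_ ?_ ?_).comp (runL _ ?_ ?_ ?_ ?_ ?_)))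
      all_goals first
        | omega
        | rfl
        | (apply upd_ext
           · simp [W]; try omega
           · intro q hq; simp [W, hq])
        | (simp [W]; try omega
           done))
  have key := p1.comp ((runR ?_ ?_ ?_ ?_).comp (p2.comp ((runR ?_ ?_ ?_ ?_).comp (p3.comp (
    (runR (C' := W (n+1) (n+2) (n+2) (n+2) n (n+1) (n+1) 0 n (n+1) 0 0 0 0 0 C)
      (p' := (0, -1)) (d' := Dir.W) ?_ ?_ ?_ ?_).comp (
    (runR (C' := W (n+1) (n+2) (n+2) 0 n (n+1) (n+1) 0 n (n+1) 0 0 0 0 0 C)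
      (p' := (0, 0)) (d' := Dir.N) ?_ ?_ ?_ ?_).comp (
    (runL (C' := W (n+2) (n+2) (n+2) 0 n (n+1) (n+1) 0 n (n+1) 0 0 0 0 0 C)
      (p' := (-1, 0)) (d' := Dir.W) (n + 1) ?_ ?_ ?_ ?_ ?_).comp (
    (runR ?_ ?_ ?_ ?_).comp (p6.comp (
    (runR (C' := W (n+2) (n+2) (n+2) 0 n (n+1) (n+1) 0 n (n+1) 0 (n+2) (n+2) 0 0 C)
      (p' := (0, 1)) (d' := Dir.E) ?_ ?_ ?_ ?_).comp (
    (runL (C' := W (n+2) (n+2) (n+2) 0 n (n+1) (n+2) 0 n (n+1) 0 (n+2) (n+2) 0 0 C)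
      (p' := (0, 2)) (d' := Dir.N) (n + 1) ?_ ?_ ?_ ?_ ?_).comp (
    (runL (C' := W (n+2) (n+2) (n+2) 0 n (n+1) (n+2) 0 n (n+1) 0 (n+2) (n+2) 1 0 C)
      (p' := (-1, 2)) (d' := Dir.W) 0 ?_ ?_ ?_ ?_ ?_).comp (
    (runL (C' := W (n+2) (n+2) (n+2) 0 n (n+1) (n+2) 0 n (n+1) 0 (n+2) (n+2) 1 1 C)
      (p' := (-1, 1)) (d' := Dir.S) 0 ?_ ?_ ?_ ?_ ?_).comp (
    (runL (C' := W (n+2) (n+2) (n+2) 0 n (n+1) (n+2) 0 n (n+1) 1 (n+2) (n+2) 1 1 C)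
      (p' := (0, 1)) (d' := Dir.E) 0 ?_ ?_ ?_ ?_ ?_).comp (
    (runR (C' := W (n+2) (n+2) (n+2) 0 n (n+1) 0 0 n (n+1) 1 (n+2) (n+2) 1 1 C)
      (p' := (0, 0)) (d' := Dir.S) ?_ ?_ ?_ ?_).comp (
    (runR (C' := W 0 (n+2) (n+2) 0 n (n+1) 0 0 n (n+1) 1 (n+2) (n+2) 1 1 C)
      (p' := (-1, 0)) (d' := Dir.W) ?_ ?_ ?_ ?_).comp (
    (runR (C' := W 0 0 (n+2) 0 n (n+1) 0 0 n (n+1) 1 (n+2) (n+2) 1 1 C)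
      (p' := (-1, 1)) (d' := Dir.N) ?_ ?_ ?_ ?_).comp (
    (runL (C' := W 0 0 (n+2) 0 n (n+1) 0 0 n (n+1) 2 (n+2) (n+2) 1 1 C)
      (p' := (-2, 1)) (d' := Dir.W) 1 ?_ ?_ ?_ ?_ ?_).comp
    (runR (C' := W 0 0 (n+2) 0 n (n+1) 0 0 n (n+1) 2 0 (n+2) 1 1 C)
      (p' := (-2, 2)) (d' := Dir.N) ?_ ?_ ?_ ?_)))))))))))))))))))
  · have key' : Run n _ _ _ (ff n) := key
    convert key' using 1
    ring
  all_goals first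
    | omega
    | rfl
    | (apply upd_ext
       · simp [W]; try omega
       · intro q hq; simp [W, hq])
    | (simp [W]; try omega
       done)

def base : Cell → ℕ := fun q =>
  if q = (1, 0) then 1 else if q = (2, 0) then 1 else if q = (1, -1) then 2 else 0

def Good (C : Cell → ℕ) : Prop :=
  ∀ x y : ℤ, (-1 ≤ y - x ∨ (-3 ≤ y - x ∧ 0 ≤ x + y)) → C (x, y) = base (x, y)

theorem base_spec (x y : ℤ) : (x = 1 ∧ y = 0 ∧ base (x, y) = 1) ∨ (x = 2 ∧ y = 0 ∧ base (x, y) = 1) ∨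
    (x = 1 ∧ y = -1 ∧ base (x, y) = 2) ∨
    (¬ (x = 1 ∧ y = 0) ∧ ¬ (x = 2 ∧ y = 0) ∧ ¬ (x = 1 ∧ y = -1) ∧ base (x, y) = 0) := by
  simp only [base, Prod.mk.injEq]
  split_ifs <;> omega

theorem ite_aux {P : Prop} [Decidable P] {a b c : ℕ} (h1 : P → a = c) (h2 : ¬ P → b = c) :
    (if P then a else b) = c := by
  split_ifs with h
  · exact h1 h
  · exact h2 h

theorem ite_aux' {P : Prop} [Decidable P] {a b c : ℕ} (h1 : P → a = c) (h2 : b = c) :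
    (if P then a else b) = c := ite_aux h1 (fun _ => h2)

theorem ite_iff_aux {P R : Prop} [Decidable P] {a b c : ℕ} (h1 : P → (a = c ↔ R))
    (h2 : ¬ P → (b = c ↔ R)) : (if P then a else b) = c ↔ R := by
  split_ifs with h
  · exact h1 h
  · exact h2 h

theorem good_W {C : Cell → ℕ} (h : Good C) : W 0 0 0 0 1 0 0 2 0 1 0 0 0 0 0 C = C := by
  funext q
  unfold W
  repeat' (refine ite_aux (fun _ => ?_) (fun _ => ?_))
  all_goals first
    | rfl
    | (subst q; rw [h _ _ (by norm_num)]; simp [base])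

theorem good_end (n : ℕ) {C : Cell → ℕ} (h : Good C) :
    Good (fun q => W 0 0 (n + 2) 0 n (n + 1) 0 0 n (n + 1) 2 0 (n + 2) 1 1 C (q + (-2, 2))) := by
  intro x y hxy
  have h' := h (x - 2) (y + 2) (by omega)
  have b1 := base_spec x y
  have b2 := base_spec (x - 2) (y + 2)
  rw [← h'] at b2
  clear h'
  simp only [W, Prod.mk_add_mk, Prod.mk.injEq, ← sub_eq_add_neg]
  have b3 : C (x - 2, y + 2) = 0 := by omega
  clear b2
  iterate 10 refine ite_aux' (fun _ => by omega) ?_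
  refine ite_aux (fun _ => by omega) (fun _ => ?_)
  iterate 2 refine ite_aux' (fun _ => by omega) ?_
  refine ite_aux (fun _ => by omega) (fun _ => ?_)
  refine ite_aux (fun _ => by omega) (fun _ => ?_)
  omega

def shift (v : Cell) (A : NCfg) : NCfg := (fun q => A.1 (q - v), A.2.1 + v, A.2.2)

theorem stp_shift (n : ℕ) (v : Cell) (A : NCfg) : stp n (shift v A) = shift v (stp n A) := by
  obtain ⟨C, p, d⟩ := A
  have hu : ∀ w, Function.update (fun q => C (q - v)) (p + v) w
      = fun q => Function.update C p w (q - v) := by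
    intro w; funext q
    simp only [Function.update_apply, sub_eq_iff_eq_add]
  simp only [stp, shift, add_sub_cancel_right]
  split_ifs
  · simp only [hu, add_right_comm]
  · simp only [hu, add_right_comm]

theorem out_shift (v : Cell) (A : NCfg) : out (shift v A) = out A := by
  simp [out, shift]

theorem iter_shift (n : ℕ) (v : Cell) (A : NCfg) (i : ℕ) :
    (stp n)^[i] (shift v A) = shift v ((stp n)^[i] A) := by
  induction i with
  | zero => rfl
  | succ i ih => rw [Function.iterate_succ_apply', Function.iterate_succ_apply', ih, stp_shift]

theorem period (n : ℕ) {C : Cell → ℕ} (h : Good C) :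
    ∃ C', Good C' ∧ (∀ i, out ((stp n)^[i + (16 * n + 36)] (C, (0, 0), Dir.N))
      = out ((stp n)^[i] (C', (0, 0), Dir.N))) ∧
      ∀ i < 16 * n + 36, out ((stp n)^[i] (C, (0, 0), Dir.N)) = ff n i := by
  have hb := big n C
  rw [good_W h] at hb
  refine ⟨_, good_end n h, ?_, hb.2⟩
  intro i
  rw [Function.iterate_add_apply, hb.1, ← out_shift (-2, 2) (_^[i] (_, (0, 0), _)), ← iter_shift]
  have e : shift (-2, 2) ((fun q => W 0 0 (n + 2) 0 n (n + 1) 0 0 n (n + 1) 2 0 (n + 2) 1 1 C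
      (q + (-2, 2))), (0, 0), Dir.N)
      = (W 0 0 (n + 2) 0 n (n + 1) 0 0 n (n + 1) 2 0 (n + 2) 1 1 C, (-2, 2), Dir.N) := by
    simp only [shift, sub_add_cancel, Prod.mk_add_mk, zero_add]
  rw [e]

theorem outs (n : ℕ) (q : ℕ) : ∀ {C : Cell → ℕ}, Good C → ∀ i < 16 * n + 36,
    out ((stp n)^[i + q * (16 * n + 36)] (C, (0, 0), Dir.N)) = ff n i := by
  induction q with
  | zero =>
    intro C h i hi
    obtain ⟨C', _, _, h3⟩ := period n h
    simpa using h3 i hi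
  | succ q ih =>
    intro C h i hi
    obtain ⟨C', h1, h2, _⟩ := period n h
    rw [Nat.succ_mul, ← add_assoc, h2]
    exact ih h1 i hi

theorem outs_mod (n : ℕ) {C : Cell → ℕ} (h : Good C) (t : ℕ) :
    out ((stp n)^[t] (C, (0, 0), Dir.N)) = ff n (t % (16 * n + 36)) := by
  rw [← outs n (t / (16 * n + 36)) h _ (Nat.mod_lt _ (by omega)), Nat.mod_add_div']

theorem spf_lt (a b c d m i K : ℕ) (hi : i < 4 * m) (ha : a + m ≤ K) (hb : b + m ≤ K)
    (hc : c + m ≤ K) (hd : d + m ≤ K) : spf a b c d i < K := by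
  unfold spf
  split_ifs <;> omega

theorem ff_max (n i : ℕ) (hi : i < 16 * n + 36) : ff n i = n + 2 ↔
    (i = 4 * n + 8 ∨ i = 8 * n + 13 ∨ i = 12 * n + 14 ∨ i = 12 * n + 15 ∨ i = 12 * n + 17 ∨
     i = 16 * n + 26 ∨ i = 16 * n + 31 ∨ i = 16 * n + 32 ∨ i = 16 * n + 33 ∨ i = 16 * n + 35) := by
  simp only [ff, cat]
  repeat' (refine ite_iff_aux (fun _ => ?_) (fun _ => ?_))
  all_goals first
    | omega
    | (refine iff_of_false (ne_of_lt (spf_lt _ _ _ _ (n + 2) _ _ ?_ ?_ ?_ ?_ ?_)) ?_ <;> omega)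
    | (refine iff_of_false (ne_of_lt (spf_lt _ _ _ _ (n + 1) _ _ ?_ ?_ ?_ ?_ ?_)) ?_ <;> omega)
    | (refine iff_of_false (ne_of_lt (spf_lt _ _ _ _ n _ _ ?_ ?_ ?_ ?_ ?_)) ?_ <;> omega)

def toZ (k : ℕ) (A : NCfg) : Config (2 * k + 1) := (fun q => (A.1 q : ZMod (2 * k + 1)), A.2)

theorem toZ_stp (k n : ℕ) (hk : 2 * k = n + 2) (A : NCfg) (hA : ∀ q, A.1 q ≤ n + 2) :
    antStep (2 * k + 1) (isL2kR k) (toZ k A) = toZ k (stp n A) ∧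
      ∀ q, (stp n A).1 q ≤ n + 2 := by
  obtain ⟨C, p, d⟩ := A
  have hp : C p ≤ n + 2 := hA p
  have hval : ((C p : ℕ) : ZMod (2 * k + 1)).val = C p := ZMod.val_cast_of_lt (by omega)
  have hu : ∀ w : ℕ, (fun q => ((Function.update C p w q : ℕ) : ZMod (2 * k + 1)))
      = Function.update (fun q => (C q : ZMod (2 * k + 1))) p (w : ZMod (2 * k + 1)) := by
    intro w; funext q
    simp only [Function.update_apply]
    split_ifs <;> rfl
  by_cases h : C p < n + 2
  · have h2 : C p < 2 * k := by omega
    constructor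
    · simp only [antStep, toZ, stp, isL2kR, hval, h, h2, if_true, decide_true, hu, Nat.cast_add,
        Nat.cast_one]
    · intro q
      simp only [stp, h, if_true, Function.update_apply]
      split_ifs
      · omega
      · exact hA q
  · have h2 : ¬ C p < 2 * k := by omega
    have h3 : ((C p : ℕ) : ZMod (2 * k + 1)) + 1 = ((0 : ℕ) : ZMod (2 * k + 1)) := by
      have : C p + 1 = 2 * k + 1 := by omega
      have h4 : ((C p + 1 : ℕ) : ZMod (2 * k + 1)) = 0 := by
        rw [this]; exact ZMod.natCast_self _
      rw [Nat.cast_add, Nat.cast_one] at h4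
      rw [h4, Nat.cast_zero]
    constructor
    · simp only [antStep, toZ, stp, isL2kR, hval, h, h2, if_false, decide_false, hu, h3,
        Bool.false_eq_true]
    · intro q
      simp only [stp, h, if_false, Function.update_apply]
      split_ifs
      · omega
      · exact hA q

theorem toZ_iter (k n : ℕ) (hk : 2 * k = n + 2) (A : NCfg) (hA : ∀ q, A.1 q ≤ n + 2) (t : ℕ) :
    (antStep (2 * k + 1) (isL2kR k))^[t] (toZ k A) = toZ k ((stp n)^[t] A) ∧
      ∀ q, ((stp n)^[t] A).1 q ≤ n + 2 := by
  induction t with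
  | zero => exact ⟨rfl, hA⟩
  | succ t ih =>
    rw [Function.iterate_succ_apply', Function.iterate_succ_apply', ih.1]
    exact toZ_stp k n hk _ ih.2

theorem good_base : Good base := fun _ _ _ => rfl

theorem toZ_base (k : ℕ) : toZ k (base, (0, 0), Dir.N) = (pic k 1 0, ((0, 0) : Cell), Dir.N) := by
  simp only [toZ, Prod.mk.injEq, and_true]
  funext ⟨x, y⟩
  simp only [base, pic, Prod.mk.injEq, Nat.cast_zero]
  split_ifs <;> first
    | omega
    | (push_cast; ring)

theorem trace_eq (k n : ℕ) (hk : 2 * k = n + 2) (t : ℕ) :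
    trace k 1 t = ((ff n (t % (16 * n + 36)) : ℕ) : ZMod (2 * k + 1)) ∧
      ff n (t % (16 * n + 36)) ≤ n + 2 := by
  have hb : ∀ q, base q ≤ n + 2 := by
    intro q; unfold base; split_ifs <;> omega
  have h := toZ_iter k n hk (base, (0, 0), Dir.N) hb t
  rw [← outs_mod n good_base t]
  refine ⟨?_, h.2 _⟩
  unfold trace
  rw [← toZ_base, h.1]
  rfl

end HHW

/-- least period of the harmonic highway. For `k > 1`, the trace
of the ant `L^{2k}R` started from `(C_{k,1}^{0}, (0,0), ↑)` is periodic of period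
`32k+4`, and `32k+4` is its smallest period. -/
theorem l2kr_harmonic_least_period (k : ℕ) (hk : 1 < k) :
    (∀ t : ℕ, trace k 1 (t + (32 * k + 4)) = trace k 1 t) ∧
    (∀ p : ℕ, 0 < p → p < 32 * k + 4 → ∃ t : ℕ, trace k 1 (t + p) ≠ trace k 1 t) := by
  obtain ⟨n, hn⟩ : ∃ n, 2 * k = n + 2 := ⟨2 * k - 2, by omega⟩
  have hP : 32 * k + 4 = 16 * n + 36 := by omega
  have hn1 : 1 ≤ n := by omega
  rw [hP]
  have heq : ∀ t u, trace k 1 t = trace k 1 u →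
      HHW.ff n (t % (16 * n + 36)) = HHW.ff n (u % (16 * n + 36)) := by
    intro t u h
    obtain ⟨e1, b1⟩ := HHW.trace_eq k n hn t
    obtain ⟨e2, b2⟩ := HHW.trace_eq k n hn u
    rw [e1, e2] at h
    have := congrArg ZMod.val h
    rwa [ZMod.val_cast_of_lt (by omega), ZMod.val_cast_of_lt (by omega)] at this
  constructor
  · intro t
    rw [(HHW.trace_eq k n hn _).1, (HHW.trace_eq k n hn t).1, Nat.add_mod_right]
  · intro p hp0 hp
    by_contra! hcon
    have key : ∀ c < 3, HHW.ff n ((16 * n + 31 + c + p) % (16 * n + 36)) = n + 2 := by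
      intro c hc
      rw [heq _ _ (hcon (16 * n + 31 + c)), Nat.mod_eq_of_lt (by omega),
        HHW.ff_max n _ (by omega)]
      omega
    have k0 := (HHW.ff_max n _ (Nat.mod_lt _ (by omega))).1 (key 0 (by omega))
    have k1 := (HHW.ff_max n _ (Nat.mod_lt _ (by omega))).1 (key 1 (by omega))
    have k2 := (HHW.ff_max n _ (Nat.mod_lt _ (by omega))).1 (key 2 (by omega))
    have hm : ∀ c < 3, (16 * n + 31 + c + p) % (16 * n + 36) =
        if 16 * n + 31 + c + p < 16 * n + 36 then 16 * n + 31 + c + p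
        else 16 * n + 31 + c + p - (16 * n + 36) := by
      intro c hc
      split_ifs with h
      · exact Nat.mod_eq_of_lt h
      · rw [Nat.mod_eq_sub_mod (by omega), Nat.mod_eq_of_lt (by omega)]
    rw [hm _ (by omega)] at k0 k1 k2
    split_ifs at k0 k1 k2 <;> omega
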